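/- Let G be a finite connected simple graph on [d]. The edge polytope 𝒫_G is type II decomposable if and only if there exists a partition [d] = V₁ ⊔ V₂ ⊔ V₃ ⊔ V₄ ⊔ V₅ of the vertex set satisfying the following conditions, where E_{i,j} denotes the set of edges of G with one endpoint in V_i and the other in V_j: (1) the induced subgraph G[V₁ ∪ V₂] is bipartite with bipartition V₁, V₂ (every edge of G[V₁ ∪ V₂] joins V₁ to V₂); (2) |E_{1,4}| ≥ 1, |E_{2,3}| ≥ 1, and every pair of edges e ∈ E_{1,4} and f ∈ E_{2,3} is cycle-compatible; (3) E_{1,3} = E_{1,5} = E_{2,4} = E_{2,5} = ∅. -/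

import Mathlib

/-- For an edge `e = {i,j}` of a graph on `[d]`, `rho e = 𝐞ᵢ + 𝐞ⱼ ∈ ℝ^d`. -/
noncomputable def rho {d : ℕ} (e : Sym2 (Fin d)) : Fin d → ℝ :=
  Sym2.lift ⟨fun i j => Pi.single i 1 + Pi.single j 1, fun _ _ => add_comm _ _⟩ e

/-- The edge polytope of a graph `G` on `[d]`: the convex hull of `{ρ(e) : e ∈ E(G)}`. -/
noncomputable def edgePolytope {d : ℕ} (G : SimpleGraph (Fin d)) : Set (Fin d → ℝ) :=
  convexHull ℝ (rho '' G.edgeSet)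

/-- A set is integral if all its extreme points have integer coordinates. -/
def IsIntegralSet {d : ℕ} (Q : Set (Fin d → ℝ)) : Prop :=
  ∀ x ∈ Q.extremePoints ℝ, ∀ i, ∃ n : ℤ, x i = (n : ℝ)

/-- The hyperplane `{x : ∑ aᵢxᵢ = c}` is a separating hyperplane of `𝒫_G`: it meets
`𝒫_G \ ∂𝒫_G` (the intrinsic interior), and both closed half-space slices are integral. -/
def IsSepHyperplane {d : ℕ} (G : SimpleGraph (Fin d)) (a : Fin d → ℝ) (c : ℝ) : Prop :=
  a ≠ 0 ∧
  (∃ x ∈ intrinsicInterior ℝ (edgePolytope G), ∑ i, a i * x i = c) ∧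
  IsIntegralSet (edgePolytope G ∩ {x | c ≤ ∑ i, a i * x i}) ∧
  IsIntegralSet (edgePolytope G ∩ {x | ∑ i, a i * x i ≤ c})

/-- `𝒫_G` is decomposable if it has a separating hyperplane. -/
def Decomposable {d : ℕ} (G : SimpleGraph (Fin d)) : Prop :=
  ∃ a c, IsSepHyperplane G a c

/-- Type II decomposability: a separating hyperplane through `0` with all `aᵢ ∈ {0,1,-1}`,
some `aᵢ = 0`, and no edge with signature `{1,1}` or `{-1,-1}`. -/
def TypeIIDecomposable {d : ℕ} (G : SimpleGraph (Fin d)) : Prop :=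
  ∃ a : Fin d → ℝ, (∀ i, a i = 0 ∨ a i = 1 ∨ a i = -1) ∧ (∃ i, a i = 0) ∧
    (∀ i j, G.Adj i j → ¬(a i = 1 ∧ a j = 1) ∧ ¬(a i = -1 ∧ a j = -1)) ∧
    IsSepHyperplane G a 0

/-- Edges `e = {i,j}` and `f = {k,l}` are cycle-compatible: the subgraph of `G` induced by
`{i,j,k,l}` contains a 4-cycle. -/
def CycleCompatible {V : Type*} (G : SimpleGraph V) (e f : Sym2 V) : Prop :=
  ∃ i j k l : V, e = s(i, j) ∧ f = s(k, l) ∧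
    ∃ a b c d' : V, ({a, b, c, d'} : Set V) ⊆ {i, j, k, l} ∧
      a ≠ b ∧ a ≠ c ∧ a ≠ d' ∧ b ≠ c ∧ b ≠ d' ∧ c ≠ d' ∧
      G.Adj a b ∧ G.Adj b c ∧ G.Adj c d' ∧ G.Adj d' a

/-!
Let `a` have entries in `{0, 1, -1}`, and let `ij` and `kl` be edges with labels `1, 0` and `-1, 0`.
The midpoint of `ρ(ij)` and `ρ(kl)` lies on the hyperplane. If the slice `0 ≤ a ⬝ᵥ x` of the edge
polytope is integral, then it is the convex hull of the `ρ(e)` it contains, so this midpoint is a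
convex combination of vertices `ρ(e)` with `e` of weight zero and supported on `{i, j, k, l}`. The
only such edge at `i` is `ik` and the only such edge at `j` is `jl`, so `i, j, l, k` is a 4-cycle.

Conversely, since `ρ(ij) + ρ(kl) = ρ(ik) + ρ(jl)`, such 4-cycles put the midpoint of any two
vertices on opposite sides into the convex hull of the vertices on the hyperplane, so no new vertex
appears when the polytope is cut.

A vertex of label zero cannot have neighbours of both labels `1` and `-1`, as the cycle condition
would make it adjacent to itself. Hence putting into `V₄` the zeros adjacent to a label `1`, and the
other zeros into `V₃`, gives the partition.
-/

section IntrinsicInterior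

open Filter Topology

theorem mem_intrinsicInterior_iff_mem_nhdsWithin {𝕜 V P : Type*} [Ring 𝕜] [AddCommGroup V]
    [Module 𝕜 V] [TopologicalSpace P] [AddTorsor V P] {s : Set P} {x : P} :
    x ∈ intrinsicInterior 𝕜 s ↔ x ∈ affineSpan 𝕜 s ∧ s ∈ 𝓝[affineSpan 𝕜 s] x := by
  rw [mem_intrinsicInterior]
  constructor
  · rintro ⟨y, hy, rfl⟩
    exact ⟨y.2, preimage_coe_mem_nhds_subtype.1 (mem_interior_iff_mem_nhds.1 hy)⟩
  · rintro ⟨hx, hs⟩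
    exact ⟨⟨x, hx⟩, mem_interior_iff_mem_nhds.2 (preimage_coe_mem_nhds_subtype.2 hs), rfl⟩

variable {E : Type*} [AddCommGroup E] [Module ℝ E] [TopologicalSpace E] [IsTopologicalAddGroup E]
  [ContinuousSMul ℝ E] {s : Set E} {x y : E}

theorem tendsto_lineMap_nhdsWithin_affineSpan (hx : x ∈ affineSpan ℝ s) (hy : y ∈ s) :
    Tendsto (AffineMap.lineMap y x) (𝓝 (1 : ℝ)) (𝓝[affineSpan ℝ s] x) := by
  have hcont : Tendsto (AffineMap.lineMap y x) (𝓝 (1 : ℝ)) (𝓝 x) := by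
    simpa using (AffineMap.lineMap_continuous (R := ℝ) (p := y) (q := x)).tendsto 1
  exact tendsto_nhdsWithin_iff.2
    ⟨hcont, .of_forall fun t => AffineMap.lineMap_mem t (subset_affineSpan ℝ s hy) hx⟩

theorem exists_one_lt_lineMap_mem (hx : x ∈ intrinsicInterior ℝ s) (hy : y ∈ s) :
    ∃ t : ℝ, 1 < t ∧ AffineMap.lineMap y x t ∈ s := by
  obtain ⟨hxs, hnhds⟩ := mem_intrinsicInterior_iff_mem_nhdsWithin.1 hx
  have hmem : ∀ᶠ t in 𝓝[>] (1 : ℝ), AffineMap.lineMap y x t ∈ s :=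
    ((tendsto_lineMap_nhdsWithin_affineSpan hxs hy).mono_left nhdsWithin_le_nhds) hnhds
  exact (eventually_mem_nhdsWithin.and hmem).exists

theorem eq_of_isMaxOn_of_mem_intrinsicInterior {φ : E →ₗ[ℝ] ℝ} (hmax : IsMaxOn φ s x)
    (hx : x ∈ intrinsicInterior ℝ s) (hy : y ∈ s) : φ y = φ x := by
  obtain ⟨t, ht, hts⟩ := exists_one_lt_lineMap_mem hx hy
  have hyx : φ y ≤ φ x := hmax hy
  have htx : φ (AffineMap.lineMap y x t) ≤ φ x := hmax hts
  simp only [AffineMap.lineMap_apply_module', map_add, map_smul, map_sub, smul_eq_mul] at htx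
  nlinarith

theorem lineMap_mem_intrinsicInterior (hs : Convex ℝ s) (hx : x ∈ intrinsicInterior ℝ s)
    (hy : y ∈ s) {t : ℝ} (ht₀ : 0 < t) (ht₁ : t ≤ 1) :
    AffineMap.lineMap y x t ∈ intrinsicInterior ℝ s := by
  obtain ⟨hxs, hnhds⟩ := mem_intrinsicInterior_iff_mem_nhdsWithin.1 hx
  have hys := subset_affineSpan ℝ s hy
  have hinv {a b : ℝ} (hab : a * b = 1) (z : E) :
      AffineMap.lineMap y (AffineMap.lineMap y z a) b = z := by
    simp [AffineMap.lineMap_apply_module', smul_smul, mul_comm b a, hab]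
  have htend : Tendsto (fun z => AffineMap.lineMap y z t⁻¹)
      (𝓝[affineSpan ℝ s] (AffineMap.lineMap y x t)) (𝓝[affineSpan ℝ s] x) := by
    refine tendsto_nhdsWithin_iff.2 ⟨?_, ?_⟩
    · have hcont : Continuous fun z : E => AffineMap.lineMap y z t⁻¹ := by
        simp only [AffineMap.lineMap_apply_module']
        fun_prop
      simpa only [hinv (mul_inv_cancel₀ ht₀.ne')] using
        (hcont.tendsto (AffineMap.lineMap y x t)).mono_left nhdsWithin_le_nhds
    · exact eventually_mem_nhdsWithin.mono fun z hz => AffineMap.lineMap_mem _ hys hz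
  refine mem_intrinsicInterior_iff_mem_nhdsWithin.2 ⟨AffineMap.lineMap_mem t hys hxs, ?_⟩
  filter_upwards [htend hnhds] with z hz
  rw [← hinv (inv_mul_cancel₀ ht₀.ne') z]
  exact hs.lineMap_mem hy hz ⟨ht₀.le, ht₁⟩

end IntrinsicInterior

section ConvexHull

theorem exists_mem_intrinsicInterior_eq {E : Type*} [NormedAddCommGroup E] [NormedSpace ℝ E]
    [FiniteDimensional ℝ E] {s : Set E} (hs : Convex ℝ s) (φ : E →ₗ[ℝ] ℝ) {c : ℝ} {p n : E}
    (hp : p ∈ s) (hn : n ∈ s) (hcp : c < φ p) (hnc : φ n < c) :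
    ∃ x ∈ intrinsicInterior ℝ s, φ x = c := by
  obtain ⟨q, hq⟩ := Set.Nonempty.intrinsicInterior hs ⟨p, hp⟩
  have of_mem_uIcc {r : E} (hr : r ∈ s) (hrc : φ r ≠ c) (hc : c ∈ Set.uIcc (φ r) (φ q)) :
      ∃ x ∈ intrinsicInterior ℝ s, φ x = c := by
    rw [← segment_eq_uIcc, segment_eq_image_lineMap] at hc
    obtain ⟨t, ⟨ht₀, ht₁⟩, rfl⟩ := hc
    have ht : t ≠ 0 := by
      rintro rfl
      simp at hrc
    refine ⟨AffineMap.lineMap r q t,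
      lineMap_mem_intrinsicInterior hs hq hr (ht₀.lt_of_ne' ht) ht₁, ?_⟩
    simp [AffineMap.lineMap_apply_module']
  rcases le_total (φ q) c with hqc | hcq
  · exact of_mem_uIcc hp hcp.ne' (Set.mem_uIcc.2 (.inr ⟨hqc, hcp.le⟩))
  · exact of_mem_uIcc hn hnc.ne (Set.mem_uIcc.2 (.inl ⟨hnc.le, hcq⟩))

/-- Any convex combination representing `x` gives positive weight to such a `y`. -/
theorem exists_mem_pos_of_mem_convexHull {𝕜 E : Type*} [Field 𝕜] [LinearOrder 𝕜]
    [IsStrictOrderedRing 𝕜] [AddCommGroup E] [Module 𝕜 E] {s : Set E} {x : E}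
    (hx : x ∈ convexHull 𝕜 s) (ψ : E →ₗ[𝕜] 𝕜) (hψ : 0 < ψ x) :
    ∃ y ∈ s, 0 < ψ y ∧ ∀ (f : E →ₗ[𝕜] 𝕜) (c : 𝕜), (∀ z ∈ s, c ≤ f z) → f x = c → f y = c := by
  obtain ⟨ι, _, w, z, hw, hw₁, hz, rfl⟩ := mem_convexHull_iff_exists_fintype.1 hx
  simp only [map_sum, map_smul, smul_eq_mul] at hψ ⊢
  obtain ⟨i, hi⟩ : ∃ i, 0 < w i * ψ (z i) := by
    by_contra! hnonpos
    exact hψ.not_ge (Finset.sum_nonpos fun i _ => hnonpos i)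
  have hψi : 0 < ψ (z i) := pos_of_mul_pos_right hi (hw i)
  have hwi : 0 < w i := pos_of_mul_pos_left hi hψi.le
  refine ⟨z i, hz i, hψi, fun f c hf hfx => ?_⟩
  have hsum : ∑ j, w j * (f (z j) - c) = 0 := by
    simp only [mul_sub, Finset.sum_sub_distrib, ← Finset.sum_mul, hw₁, hfx, one_mul, sub_self]
  have hterm := (Finset.sum_eq_zero_iff_of_nonneg fun j _ =>
    mul_nonneg (hw j) (sub_nonneg.2 (hf _ (hz j)))).1 hsum i (Finset.mem_univ i)
  exact sub_eq_zero.1 ((mul_eq_zero.1 hterm).resolve_left hwi.ne')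

theorem mem_of_mem_convexHull_of_forall_eq_intCast {ι : Type*} {s : Set (ι → ℝ)}
    (hs : s ⊆ Set.univ.pi fun _ => Set.Icc 0 1) {x : ι → ℝ} (hx : x ∈ convexHull ℝ s)
    (hint : ∀ i, ∃ n : ℤ, x i = n) : x ∈ s := by
  have hsub : convexHull ℝ s ⊆ Set.univ.pi fun _ => Set.Icc (0 : ℝ) 1 :=
    convexHull_min hs (convex_pi fun _ _ => convex_Icc 0 1)
  have hext : x ∈ (Set.univ.pi fun _ : ι => Set.Icc (0 : ℝ) 1).extremePoints ℝ := by
    rw [extremePoints_pi]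
    intro i hi
    rw [Set.extremePoints_Icc zero_le_one]
    obtain ⟨n, hn⟩ := hint i
    obtain ⟨h₀, h₁⟩ := hsub hx i hi
    rw [hn] at h₀ h₁
    norm_cast at h₀ h₁
    obtain rfl | rfl : n = 0 ∨ n = 1 := by omega
    all_goals simp [hn]
  exact extremePoints_convexHull_subset
    (inter_extremePoints_subset_extremePoints_of_subset hsub ⟨hx, hext⟩)

section Slice

variable {𝕜 E : Type*} [Field 𝕜] [LinearOrder 𝕜] [IsStrictOrderedRing 𝕜] [AddCommGroup E]
  [Module 𝕜 E]

theorem midpoint_mem_of_mem_convexHull {s t C : Set E} (hC : Convex 𝕜 C)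
    (h : ∀ p ∈ s, ∀ n ∈ t, midpoint 𝕜 p n ∈ C) {p n : E} (hp : p ∈ convexHull 𝕜 s)
    (hn : n ∈ convexHull 𝕜 t) : midpoint 𝕜 p n ∈ C := by
  let μ : E × E →ₗ[𝕜] E := (⅟2 : 𝕜) • (LinearMap.fst 𝕜 E E + LinearMap.snd 𝕜 E E)
  have hμ (q : E × E) : μ q = midpoint 𝕜 q.1 q.2 := (midpoint_eq_smul_add 𝕜 q.1 q.2).symm
  have hsub : convexHull 𝕜 (s ×ˢ t) ⊆ μ ⁻¹' C :=
    convexHull_min (fun q hq => by simpa only [Set.mem_preimage, hμ] using h _ hq.1 _ hq.2)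
      (hC.linear_preimage μ)
  rw [← hμ (p, n)]
  exact hsub (convexHull_prod (R := 𝕜) s t ▸ Set.mk_mem_prod hp hn)

theorem smul_add_smul_mem_of_midpoint_mem {C : Set E} (hC : Convex 𝕜 C) {p n : E} {γ δ : 𝕜}
    (hp : p ∈ C) (hmid : midpoint 𝕜 p n ∈ C) (hδ : 0 ≤ δ) (hδγ : δ ≤ γ) (hγδ : γ + δ = 1) :
    γ • p + δ • n ∈ C := by
  have hpn : γ • p + δ • n = (γ - δ) • p + (2 * δ) • midpoint 𝕜 p n := by
    rw [midpoint_eq_smul_add, smul_smul, invOf_eq_inv, mul_right_comm, mul_inv_cancel₀ two_ne_zero]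
    module
  rw [hpn]
  exact hC hp hmid (sub_nonneg.2 hδγ) (by positivity) (by linarith)

theorem convexHull_inter_nonneg_eq {s : Set E} (φ : E →ₗ[𝕜] 𝕜)
    (hφ : ∀ x ∈ s, φ x = 0 ∨ φ x = 1 ∨ φ x = -1) (hpos : ∃ x ∈ s, φ x = 1)
    (hneg : ∃ x ∈ s, φ x = -1)
    (hmid : ∀ p ∈ s, ∀ n ∈ s, φ p = 1 → φ n = -1 →
      midpoint 𝕜 p n ∈ convexHull 𝕜 (s ∩ {x | φ x = 0})) :
    convexHull 𝕜 s ∩ {x | 0 ≤ φ x} = convexHull 𝕜 (s ∩ {x | 0 ≤ φ x}) := by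
  set level : 𝕜 → Set E := fun c => s ∩ {x | φ x = c} with hlevel
  have hs : s = level 1 ∪ level (-1) ∪ level 0 := by
    ext x
    have := hφ x
    simp only [hlevel, Set.mem_union, Set.mem_inter_iff, Set.mem_ofPred_eq]
    tauto
  have hφlevel {c : 𝕜} : ∀ x ∈ convexHull 𝕜 (level c), φ x = c :=
    convexHull_min Set.inter_subset_right (convex_hyperplane φ.isLinear c)
  have hlevel_sub {c : 𝕜} (hc : 0 ≤ c) :
      convexHull 𝕜 (level c) ⊆ convexHull 𝕜 (s ∩ {x | 0 ≤ φ x}) :=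
    convexHull_mono fun x hx => ⟨hx.1, hc.trans_eq hx.2.symm⟩
  have hmid' {p n : E} (hp : p ∈ convexHull 𝕜 (level 1)) (hn : n ∈ convexHull 𝕜 (level (-1))) :
      midpoint 𝕜 p n ∈ convexHull 𝕜 (level 0) :=
    midpoint_mem_of_mem_convexHull (convex_convexHull 𝕜 _)
      (fun p hp n hn => hmid p hp.1 n hn.1 hp.2 hn.2) hp hn
  obtain ⟨p₀, hp₀⟩ : (level 1).Nonempty := hpos
  obtain ⟨n₀, hn₀⟩ : (level (-1)).Nonempty := hneg
  have hzero : (level 0).Nonempty := convexHull_nonempty_iff.1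
    ⟨_, hmid' (subset_convexHull 𝕜 _ hp₀) (subset_convexHull 𝕜 _ hn₀)⟩
  refine Set.Subset.antisymm ?_ (Set.subset_inter (convexHull_mono Set.inter_subset_left)
    (convexHull_min Set.inter_subset_right (convex_halfSpace_ge φ.isLinear 0)))
  rintro x ⟨hx, hφx⟩
  rw [hs, convexHull_union (.inl ⟨p₀, hp₀⟩) hzero, mem_convexJoin] at hx
  obtain ⟨y, hy, z, hz, α, β, hα, hβ, hαβ, rfl⟩ := hx
  rw [convexHull_union ⟨p₀, hp₀⟩ ⟨n₀, hn₀⟩, mem_convexJoin] at hy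
  obtain ⟨p, hp, n, hn, γ, δ, -, hδ, hγδ, rfl⟩ := hy
  rcases hα.eq_or_lt with rfl | hα
  · obtain rfl : β = 1 := by linarith
    simpa using hlevel_sub le_rfl hz
  have hδγ : δ ≤ γ := by
    simp only [Set.mem_ofPred_eq, map_add, map_smul, smul_eq_mul, hφlevel p hp, hφlevel n hn,
      hφlevel z hz] at hφx
    have : 0 ≤ α * (γ - δ) := by linarith
    exact sub_nonneg.1 (nonneg_of_mul_nonneg_right this hα)
  refine convex_convexHull 𝕜 _ ?_ (hlevel_sub le_rfl hz) hα.le hβ hαβ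
  exact smul_add_smul_mem_of_midpoint_mem (convex_convexHull 𝕜 _) (hlevel_sub zero_le_one hp)
    (hlevel_sub le_rfl (hmid' hp hn)) hδ hδγ hγδ

end Slice

end ConvexHull

section EdgePolytope

variable {d : ℕ} {G : SimpleGraph (Fin d)} {a x : Fin d → ℝ} {c : ℝ} {K s : Set (Fin d → ℝ)}

theorem dotProduct_rho_mk (a : Fin d → ℝ) (u v : Fin d) : a ⬝ᵥ rho s(u, v) = a u + a v := by
  simp [rho, dotProduct_add]

theorem rho_mk_add_rho_mk_comm (i j k l : Fin d) :
    rho s(i, j) + rho s(k, l) = rho s(i, k) + rho s(j, l) :=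
  add_add_add_comm _ _ _ _

theorem rho_apply_nonneg (e : Sym2 (Fin d)) (v : Fin d) : 0 ≤ rho e v := by
  induction e with
  | h i j =>
    have hsingle (k : Fin d) : 0 ≤ (Pi.single k 1 : Fin d → ℝ) := Pi.single_nonneg.2 zero_le_one
    exact add_nonneg (hsingle i v) (hsingle j v)

theorem rho_apply_pos_iff_mem {e : Sym2 (Fin d)} {v : Fin d} : 0 < rho e v ↔ v ∈ e := by
  induction e with
  | h i j =>
    simp only [rho, Sym2.lift_mk, Pi.add_apply, Pi.single_apply, Sym2.mem_iff]
    split_ifs <;> simp_all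

theorem rho_apply_eq_zero_iff_notMem {e : Sym2 (Fin d)} {v : Fin d} : rho e v = 0 ↔ v ∉ e := by
  rw [← rho_apply_pos_iff_mem, (rho_apply_nonneg e v).lt_iff_ne', not_not]

theorem exists_rho_apply_eq_intCast (e : Sym2 (Fin d)) (v : Fin d) : ∃ n : ℤ, rho e v = n := by
  induction e with
  | h i j =>
    refine ⟨(Pi.single i 1 + Pi.single j 1 : Fin d → ℤ) v, ?_⟩
    simp [rho, Pi.single_apply]

theorem rho_image_edgeSet_subset_Icc (G : SimpleGraph (Fin d)) :
    rho '' G.edgeSet ⊆ Set.univ.pi fun _ => Set.Icc 0 1 := by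
  rintro _ ⟨e, he, rfl⟩ v -
  refine ⟨rho_apply_nonneg e v, ?_⟩
  induction e with
  | h i j =>
    have : i ≠ j := (G.mem_edgeSet.1 he).ne
    simp only [rho, Sym2.lift_mk, Pi.add_apply, Pi.single_apply]
    split_ifs <;> simp_all

theorem rho_mem_edgePolytope {e : Sym2 (Fin d)} (he : e ∈ G.edgeSet) : rho e ∈ edgePolytope G :=
  subset_convexHull ℝ _ (Set.mem_image_of_mem rho he)

theorem isCompact_edgePolytope (G : SimpleGraph (Fin d)) : IsCompact (edgePolytope G) :=
  (Set.toFinite _).isCompact_convexHull ℝ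

theorem isIntegralSet_convexHull (hs : s ⊆ Set.range rho) : IsIntegralSet (convexHull ℝ s) := by
  intro x hx
  obtain ⟨e, rfl⟩ := hs (extremePoints_convexHull_subset hx)
  exact exists_rho_apply_eq_intCast e

theorem IsIntegralSet.convexHull_rho_inter_eq (hint : IsIntegralSet K) (hcomp : IsCompact K)
    (hconv : Convex ℝ K) (hK : K ⊆ edgePolytope G) :
    convexHull ℝ (rho '' G.edgeSet ∩ K) = K := by
  refine (convexHull_min Set.inter_subset_right hconv).antisymm ?_
  have hext : K.extremePoints ℝ ⊆ rho '' G.edgeSet ∩ K := fun x hx =>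
    ⟨mem_of_mem_convexHull_of_forall_eq_intCast (rho_image_edgeSet_subset_Icc G) (hK hx.1)
      (hint x hx), hx.1⟩
  have hclosed : IsClosed (convexHull ℝ (rho '' G.edgeSet ∩ K)) :=
    ((Set.toFinite _).isCompact_convexHull ℝ).isClosed
  calc K = closure (convexHull ℝ (K.extremePoints ℝ)) :=
        (closure_convexHull_extremePoints hcomp hconv).symm
    _ ⊆ convexHull ℝ (rho '' G.edgeSet ∩ K) := closure_minimal (convexHull_mono hext) hclosed

theorem IsIntegralSet.convexHull_rho_inter_slice_eq
    (hint : IsIntegralSet (edgePolytope G ∩ {x | c ≤ a ⬝ᵥ x})) :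
    convexHull ℝ (rho '' G.edgeSet ∩ {x | c ≤ a ⬝ᵥ x}) =
      edgePolytope G ∩ {x | c ≤ a ⬝ᵥ x} := by
  have hclosed : IsClosed {x : Fin d → ℝ | c ≤ a ⬝ᵥ x} :=
    isClosed_le continuous_const (continuous_const.dotProduct continuous_id)
  have hconv : Convex ℝ {x : Fin d → ℝ | c ≤ a ⬝ᵥ x} :=
    convex_halfSpace_ge (dotProductEquiv ℝ (Fin d) a).isLinear c
  have := hint.convexHull_rho_inter_eq ((isCompact_edgePolytope G).inter_right hclosed)
    ((convex_convexHull ℝ _).inter hconv) Set.inter_subset_left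
  have hsub : rho '' G.edgeSet ⊆ edgePolytope G := subset_convexHull ℝ _
  rwa [← Set.inter_assoc, Set.inter_eq_left.2 hsub] at this

theorem exists_adj_of_isIntegralSet
    (hint : IsIntegralSet (edgePolytope G ∩ {x | c ≤ a ⬝ᵥ x})) {e f : Sym2 (Fin d)}
    (he : e ∈ G.edgeSet) (hf : f ∈ G.edgeSet) (hef : a ⬝ᵥ rho e + a ⬝ᵥ rho f = 2 * c)
    {w : Fin d} (hw : w ∈ e ∨ w ∈ f) :
    ∃ t, (t ∈ e ∨ t ∈ f) ∧ G.Adj w t ∧ a w + a t = c := by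
  set m := midpoint ℝ (rho e) (rho f)
  have hm (φ : (Fin d → ℝ) →ₗ[ℝ] ℝ) : φ m = (φ (rho e) + φ (rho f)) / 2 := by
    simp only [m, midpoint_eq_smul_add, map_smul, map_add, invOf_eq_inv, smul_eq_mul]
    ring
  have hma : a ⬝ᵥ m = c := by
    have := hm (dotProductEquiv ℝ (Fin d) a)
    simp only [dotProductEquiv_apply_apply] at this
    linarith
  have hmK : m ∈ convexHull ℝ (rho '' G.edgeSet ∩ {x | c ≤ a ⬝ᵥ x}) := by
    rw [hint.convexHull_rho_inter_slice_eq]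
    exact ⟨(convex_convexHull ℝ _).midpoint_mem (rho_mem_edgePolytope he)
      (rho_mem_edgePolytope hf), hma.ge⟩
  have hmw : 0 < LinearMap.proj (R := ℝ) w m := by
    rw [hm]
    have := rho_apply_nonneg e w
    have := rho_apply_nonneg f w
    rcases hw with hw | hw <;> have := rho_apply_pos_iff_mem.2 hw <;>
      simp only [LinearMap.proj_apply] <;> linarith
  obtain ⟨_, ⟨⟨g, hg, rfl⟩, -⟩, hgw, hface⟩ := exists_mem_pos_of_mem_convexHull hmK _ hmw
  obtain ⟨t, rfl⟩ := rho_apply_pos_iff_mem.1 hgw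
  refine ⟨t, ?_, hg, ?_⟩
  · by_contra! ht
    have := hface (LinearMap.proj t) 0
      (by rintro _ ⟨⟨h, -, rfl⟩, -⟩; exact rho_apply_nonneg h t)
      (by simp [hm, rho_apply_eq_zero_iff_notMem.2 ht.1, rho_apply_eq_zero_iff_notMem.2 ht.2])
    exact rho_apply_eq_zero_iff_notMem.1 this (Sym2.mem_mk_right w t)
  · rw [← dotProduct_rho_mk]
    exact hface (dotProductEquiv ℝ (Fin d) a) c (fun z hz => hz.2) hma

theorem exists_adj_add_pos (hG : G.Preconnected) (ha : a ≠ 0) (ha₀ : ∃ i, a i = 0)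
    (hx : x ∈ intrinsicInterior ℝ (edgePolytope G)) (hax : a ⬝ᵥ x = 0) :
    ∃ u v, G.Adj u v ∧ 0 < a u + a v := by
  by_contra! hnonpos
  let φ := dotProductEquiv ℝ (Fin d) a
  have hφx : φ x = 0 := hax
  have hmax : IsMaxOn φ (edgePolytope G) x := by
    refine convexHull_min ?_ (convex_halfSpace_le φ.isLinear (φ x))
    rintro _ ⟨e, he, rfl⟩
    induction e with
    | h u v => exact (dotProduct_rho_mk a u v).trans_le ((hnonpos u v he).trans_eq hφx.symm)
  have hadj {u v : Fin d} (huv : G.Adj u v) : a u + a v = 0 := by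
    rw [← dotProduct_rho_mk, ← hφx]
    exact eq_of_isMaxOn_of_mem_intrinsicInterior hmax hx (rho_mem_edgePolytope huv)
  obtain ⟨i, hi⟩ := ha₀
  refine ha (funext fun j => show a j = 0 from ?_)
  induction (SimpleGraph.reachable_iff_reflTransGen i j).1 (hG i j) with
  | refl => exact hi
  | tail _ huv hu => simpa only [hu, zero_add] using hadj huv

end EdgePolytope

section Labelling

/-- The coefficient vectors of type II separating hyperplanes, described through the graph alone:
by `adj_and_adj`, any edges `ij` and `kl` with labels `1, 0` and `-1, 0` are opposite edges of a
4-cycle whose other two edges `ik` and `jl` have weight zero. -/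
structure IsTypeIILabelling {V : Type*} (G : SimpleGraph V) (a : V → ℝ) : Prop where
  eq_zero_or_one_or_neg_one : ∀ i, a i = 0 ∨ a i = 1 ∨ a i = -1
  not_both : ∀ i j, G.Adj i j → ¬(a i = 1 ∧ a j = 1) ∧ ¬(a i = -1 ∧ a j = -1)
  exists_pos : ∃ i j, G.Adj i j ∧ a i = 1 ∧ a j = 0
  exists_neg : ∃ k l, G.Adj k l ∧ a k = -1 ∧ a l = 0
  adj_and_adj : ∀ i j k l, a i = 1 → a j = 0 → a k = -1 → a l = 0 → G.Adj i j → G.Adj k l →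
    G.Adj i k ∧ G.Adj j l

theorem neg_eq_zero_or_one_or_neg_one {r : ℝ} (hr : r = 0 ∨ r = 1 ∨ r = -1) :
    -r = 0 ∨ -r = 1 ∨ -r = -1 := by
  rcases hr with rfl | rfl | rfl <;> norm_num

theorem add_eq_zero_or_one_or_neg_one {r s : ℝ} (hr : r = 0 ∨ r = 1 ∨ r = -1)
    (hs : s = 0 ∨ s = 1 ∨ s = -1) (hrs : ¬(r = 1 ∧ s = 1) ∧ ¬(r = -1 ∧ s = -1)) :
    r + s = 0 ∨ r + s = 1 ∨ r + s = -1 := by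
  rcases hr with rfl | rfl | rfl <;> rcases hs with rfl | rfl | rfl <;> simp at hrs ⊢

theorem exists_mk_eq_of_add_eq_one {V : Type*} {a : V → ℝ}
    (ha : ∀ i, a i = 0 ∨ a i = 1 ∨ a i = -1) {u v : V} (huv : a u + a v = 1) :
    ∃ i j, s(u, v) = s(i, j) ∧ a i = 1 ∧ a j = 0 := by
  rcases ha u with hu | hu | hu
  · exact ⟨v, u, Sym2.eq_swap, by linarith, hu⟩
  · exact ⟨u, v, rfl, hu, by linarith⟩
  · rcases ha v with hv | hv | hv <;> norm_num [hu, hv] at huv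

theorem exists_mk_eq_of_add_eq_neg_one {V : Type*} {a : V → ℝ}
    (ha : ∀ i, a i = 0 ∨ a i = 1 ∨ a i = -1) {u v : V} (huv : a u + a v = -1) :
    ∃ k l, s(u, v) = s(k, l) ∧ a k = -1 ∧ a l = 0 := by
  obtain ⟨k, l, heq, hk, hl⟩ := exists_mk_eq_of_add_eq_one (a := -a)
    (fun i => neg_eq_zero_or_one_or_neg_one (ha i)) (u := u) (v := v)
    (by simp only [Pi.neg_apply]; linarith)
  exact ⟨k, l, heq, neg_eq_iff_eq_neg.1 hk, neg_eq_zero.1 hl⟩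

theorem IsTypeIILabelling.neg {V : Type*} {G : SimpleGraph V} {a : V → ℝ}
    (h : IsTypeIILabelling G a) : IsTypeIILabelling G (-a) where
  eq_zero_or_one_or_neg_one i := neg_eq_zero_or_one_or_neg_one (h.eq_zero_or_one_or_neg_one i)
  not_both i j hij := by
    simpa [neg_eq_iff_eq_neg, and_comm] using h.not_both i j hij
  exists_pos := by simpa [neg_eq_iff_eq_neg] using h.exists_neg
  exists_neg := by simpa using h.exists_pos
  adj_and_adj i j k l hi hj hk hl hij hkl := by
    simp only [Pi.neg_apply, neg_eq_iff_eq_neg, neg_neg, neg_zero] at hi hj hk hl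
    have := h.adj_and_adj k l i j hk hl hi hj hkl hij
    exact ⟨this.1.symm, this.2.symm⟩

variable {d : ℕ} {G : SimpleGraph (Fin d)} {a : Fin d → ℝ}

theorem IsTypeIILabelling.midpoint_rho_mem (h : IsTypeIILabelling G a) {u v u' v' : Fin d}
    (huv : G.Adj u v) (huv' : G.Adj u' v') (hpos : a u + a v = 1) (hneg : a u' + a v' = -1) :
    midpoint ℝ (rho s(u, v)) (rho s(u', v')) ∈
      convexHull ℝ (rho '' G.edgeSet ∩ {x | a ⬝ᵥ x = 0}) := by
  obtain ⟨i, j, hij, hi, hj⟩ := exists_mk_eq_of_add_eq_one h.eq_zero_or_one_or_neg_one hpos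
  obtain ⟨k, l, hkl, hk, hl⟩ := exists_mk_eq_of_add_eq_neg_one h.eq_zero_or_one_or_neg_one hneg
  rw [← SimpleGraph.mem_edgeSet] at huv huv'
  rw [hij] at huv ⊢
  rw [hkl] at huv' ⊢
  obtain ⟨hik, hjl⟩ := h.adj_and_adj i j k l hi hj hk hl huv huv'
  rw [midpoint_eq_smul_add, rho_mk_add_rho_mk_comm, ← midpoint_eq_smul_add]
  refine (convex_convexHull ℝ _).midpoint_mem (subset_convexHull ℝ _ ⟨⟨_, hik, rfl⟩, ?_⟩)
    (subset_convexHull ℝ _ ⟨⟨_, hjl, rfl⟩, ?_⟩)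
  · simp [dotProduct_rho_mk, hi, hk]
  · simp [dotProduct_rho_mk, hj, hl]

theorem IsTypeIILabelling.isIntegralSet_inter_nonneg (h : IsTypeIILabelling G a) :
    IsIntegralSet (edgePolytope G ∩ {x | 0 ≤ a ⬝ᵥ x}) := by
  let φ := dotProductEquiv ℝ (Fin d) a
  have hφ (u v : Fin d) : φ (rho s(u, v)) = a u + a v := dotProduct_rho_mk a u v
  have hslice : edgePolytope G ∩ {x | 0 ≤ φ x} =
      convexHull ℝ (rho '' G.edgeSet ∩ {x | 0 ≤ φ x}) := by
    refine convexHull_inter_nonneg_eq φ ?_ ?_ ?_ ?_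
    · rintro _ ⟨⟨u, v⟩, huv, rfl⟩
      rw [hφ]
      exact add_eq_zero_or_one_or_neg_one (h.eq_zero_or_one_or_neg_one u)
        (h.eq_zero_or_one_or_neg_one v) (h.not_both u v huv)
    · obtain ⟨i, j, hij, hi, hj⟩ := h.exists_pos
      exact ⟨_, ⟨s(i, j), hij, rfl⟩, by rw [hφ, hi, hj, add_zero]⟩
    · obtain ⟨k, l, hkl, hk, hl⟩ := h.exists_neg
      exact ⟨_, ⟨s(k, l), hkl, rfl⟩, by rw [hφ, hk, hl, add_zero]⟩
    · rintro _ ⟨⟨u, v⟩, huv, rfl⟩ _ ⟨⟨u', v'⟩, huv', rfl⟩ hpos hneg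
      exact h.midpoint_rho_mem huv huv' ((hφ u v).symm.trans hpos) ((hφ u' v').symm.trans hneg)
  exact hslice ▸ isIntegralSet_convexHull (Set.inter_subset_left.trans (Set.image_subset_range ..))

theorem IsTypeIILabelling.isSepHyperplane (h : IsTypeIILabelling G a) : IsSepHyperplane G a 0 := by
  obtain ⟨i, j, hij, hi, hj⟩ := h.exists_pos
  obtain ⟨k, l, hkl, hk, hl⟩ := h.exists_neg
  refine ⟨?_, ?_, h.isIntegralSet_inter_nonneg, ?_⟩
  · rintro rfl
    simp at hi
  · exact exists_mem_intrinsicInterior_eq (convex_convexHull ℝ _) (dotProductEquiv ℝ (Fin d) a)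
      (rho_mem_edgePolytope (e := s(i, j)) hij) (rho_mem_edgePolytope (e := s(k, l)) hkl)
      (by simp [dotProduct_rho_mk, hi, hj]) (by simp [dotProduct_rho_mk, hk, hl])
  · have := h.neg.isIntegralSet_inter_nonneg
    simp only [neg_dotProduct, Left.nonneg_neg_iff] at this
    exact this

theorem adj_and_adj_of_isIntegralSet (hint : IsIntegralSet (edgePolytope G ∩ {x | 0 ≤ a ⬝ᵥ x}))
    {i j k l : Fin d} (hi : a i = 1) (hj : a j = 0) (hk : a k = -1) (hl : a l = 0)
    (hij : G.Adj i j) (hkl : G.Adj k l) : G.Adj i k ∧ G.Adj j l := by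
  have hforced {w : Fin d} (hw : w ∈ s(i, j) ∨ w ∈ s(k, l)) :=
    exists_adj_of_isIntegralSet hint (e := s(i, j)) (f := s(k, l)) hij hkl
      (by simp [dotProduct_rho_mk, hi, hj, hk, hl]) hw
  simp only [Sym2.mem_iff] at hforced
  constructor
  · obtain ⟨t, (rfl | rfl) | rfl | rfl, hit, hsum⟩ := hforced (w := i) (by simp)
    · linarith
    · linarith
    · exact hit
    · linarith
  · obtain ⟨t, (rfl | rfl) | rfl | rfl, hjt, hsum⟩ := hforced (w := j) (by simp)
    · linarith
    · exact absurd hjt G.irrefl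
    · linarith
    · exact hjt

theorem IsSepHyperplane.isTypeIILabelling (hG : G.Preconnected) (h : IsSepHyperplane G a 0)
    (ha : ∀ i, a i = 0 ∨ a i = 1 ∨ a i = -1) (hzero : ∃ i, a i = 0)
    (hboth : ∀ i j, G.Adj i j → ¬(a i = 1 ∧ a j = 1) ∧ ¬(a i = -1 ∧ a j = -1)) :
    IsTypeIILabelling G a := by
  obtain ⟨hne, ⟨x, hx, hax⟩, hint, -⟩ := h
  have hadd {u v : Fin d} (huv : G.Adj u v) :=
    add_eq_zero_or_one_or_neg_one (ha u) (ha v) (hboth u v huv)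
  refine ⟨ha, hboth, ?_, ?_, ?_⟩
  · obtain ⟨u, v, huv, hpos⟩ := exists_adj_add_pos hG hne hzero hx hax
    have hone : a u + a v = 1 := by rcases hadd huv with h | h | h <;> linarith
    obtain ⟨i, j, heq, hij⟩ := exists_mk_eq_of_add_eq_one ha hone
    exact ⟨i, j, by rwa [← G.mem_edgeSet, ← heq], hij⟩
  · obtain ⟨u, v, huv, hpos⟩ := exists_adj_add_pos (a := -a) hG (neg_ne_zero.2 hne)
      (by simpa using hzero) hx (by rw [neg_dotProduct, neg_eq_zero]; exact hax)
    simp only [Pi.neg_apply] at hpos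
    have hone : a u + a v = -1 := by rcases hadd huv with h | h | h <;> linarith
    obtain ⟨k, l, heq, hkl⟩ := exists_mk_eq_of_add_eq_neg_one ha hone
    exact ⟨k, l, by rwa [← G.mem_edgeSet, ← heq], hkl⟩
  · exact fun i j k l hi hj hk hl => adj_and_adj_of_isIntegralSet hint hi hj hk hl

theorem typeIIDecomposable_iff_exists_isTypeIILabelling (hG : G.Preconnected) :
    TypeIIDecomposable G ↔ ∃ a, IsTypeIILabelling G a :=
  ⟨fun ⟨a, ha, hzero, hboth, hsep⟩ => ⟨a, hsep.isTypeIILabelling hG ha hzero hboth⟩,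
    fun ⟨a, h⟩ => ⟨a, h.eq_zero_or_one_or_neg_one,
      let ⟨_, j, _, _, hj⟩ := h.exists_pos; ⟨j, hj⟩, h.not_both, h.isSepHyperplane⟩⟩

end Labelling

section FourCycle

variable {V : Type*} {G : SimpleGraph V}

theorem cycleCompatible_of_adj {i j k l : V} (hij : G.Adj i j) (hkl : G.Adj k l) (hik : G.Adj i k)
    (hjl : G.Adj j l) (hil : i ≠ l) (hjk : j ≠ k) : CycleCompatible G s(i, j) s(k, l) :=
  ⟨i, j, k, l, rfl, rfl, i, j, l, k, by grind, hij.ne, hil, hik.ne, hjl.ne, hjk, hkl.ne',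
    hij, hjl, hkl.symm, hik.symm⟩

theorem CycleCompatible.exists_two_adj {e f : Sym2 V} (h : CycleCompatible G e f) {v : V}
    (hv : v ∈ e ∨ v ∈ f) :
    ∃ x y, x ≠ y ∧ (x ∈ e ∨ x ∈ f) ∧ (y ∈ e ∨ y ∈ f) ∧ G.Adj v x ∧ G.Adj v y := by
  obtain ⟨i, j, k, l, rfl, rfl, a, b, c, d, hsub, hab, hac, had, hbc, hbd, hcd,
    hadj_ab, hadj_bc, hadj_cd, hadj_da⟩ := h
  have hcard : ({i, j, k, l} : Set V).ncard ≤ ({a, b, c, d} : Set V).ncard := by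
    classical
    have hcycle : ({a, b, c, d} : Finset V).card = 4 := by grind
    have hverts : ({i, j, k, l} : Finset V).card ≤ 4 := Finset.card_le_four
    rw [← hcycle, ← Set.ncard_coe_finset, ← Set.ncard_coe_finset] at hverts
    simpa using hverts
  have heq := Set.eq_of_subset_of_ncard_le hsub hcard (Set.toFinite _)
  have hmem (x : V) : (x ∈ s(i, j) ∨ x ∈ s(k, l)) ↔ x = a ∨ x = b ∨ x = c ∨ x = d := by
    simpa [or_assoc] using (Set.ext_iff.1 heq x).symm
  simp only [hmem] at hv ⊢
  rcases hv with rfl | rfl | rfl | rfl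
  · exact ⟨b, d, hbd, by simp, by simp, hadj_ab, hadj_da.symm⟩
  · exact ⟨a, c, hac, by simp, by simp, hadj_ab.symm, hadj_bc⟩
  · exact ⟨b, d, hbd, by simp, by simp, hadj_bc.symm, hadj_cd⟩
  · exact ⟨a, c, hac, by simp, by simp, hadj_da, hadj_cd.symm⟩

theorem CycleCompatible.adj_and_adj {i j k l : V} (h : CycleCompatible G s(i, j) s(k, l))
    (hil : ¬G.Adj i l) (hjk : ¬G.Adj j k) : G.Adj i k ∧ G.Adj j l := by
  obtain ⟨x, y, hxy, hx, hy, hix, hiy⟩ := h.exists_two_adj (.inl (Sym2.mem_mk_left i j))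
  obtain ⟨z, w, hzw, hz, hw, hjz, hjw⟩ := h.exists_two_adj (.inl (Sym2.mem_mk_right i j))
  have neighbor_i {t : V} (ht : t ∈ s(i, j) ∨ t ∈ s(k, l)) (hit : G.Adj i t) : t = j ∨ t = k := by
    rcases ht with ht | ht <;> rcases Sym2.mem_iff.1 ht with rfl | rfl <;> simp_all
  have neighbor_j {t : V} (ht : t ∈ s(i, j) ∨ t ∈ s(k, l)) (hjt : G.Adj j t) : t = i ∨ t = l := by
    rcases ht with ht | ht <;> rcases Sym2.mem_iff.1 ht with rfl | rfl <;> simp_all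
  constructor
  · rcases neighbor_i hx hix with rfl | rfl
    · exact (neighbor_i hy hiy).resolve_left hxy.symm ▸ hiy
    · exact hix
  · rcases neighbor_j hz hjz with rfl | rfl
    · exact (neighbor_j hw hjw).resolve_left hzw.symm ▸ hjw
    · exact hjz

end FourCycle

section Partition

variable {V : Type*} {G : SimpleGraph V}

/-- The partitions `V = V₁ ⊔ V₂ ⊔ V₃ ⊔ V₄ ⊔ V₅` of conditions (1)–(3), with `V₅`, unlike `V₁`,
`V₂`, `V₃` and `V₄`, possibly empty; `E_{i,j}` is the set of adjacent pairs in `Vᵢ × Vⱼ`. -/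
structure IsTypeIIPartition (G : SimpleGraph V) (V₁ V₂ V₃ V₄ V₅ : Set V) : Prop where
  exhaustive : ∀ v, v ∈ V₁ ∨ v ∈ V₂ ∨ v ∈ V₃ ∨ v ∈ V₄ ∨ v ∈ V₅
  pairwise_disjoint : [V₁, V₂, V₃, V₄, V₅].Pairwise Disjoint
  bipartite : ∀ i j, G.Adj i j → i ∈ V₁ ∪ V₂ → j ∈ V₁ ∪ V₂ →
    (i ∈ V₁ ∧ j ∈ V₂) ∨ (i ∈ V₂ ∧ j ∈ V₁)
  exists_adj₁₄ : ∃ i j, i ∈ V₁ ∧ j ∈ V₄ ∧ G.Adj i j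
  exists_adj₂₃ : ∃ k l, k ∈ V₂ ∧ l ∈ V₃ ∧ G.Adj k l
  cycleCompatible : ∀ i j k l, i ∈ V₁ → j ∈ V₄ → k ∈ V₂ → l ∈ V₃ → G.Adj i j → G.Adj k l →
    CycleCompatible G s(i, j) s(k, l)
  not_adj : ∀ i j, G.Adj i j → ¬(i ∈ V₁ ∧ j ∈ V₃) ∧ ¬(i ∈ V₁ ∧ j ∈ V₅) ∧
    ¬(i ∈ V₂ ∧ j ∈ V₄) ∧ ¬(i ∈ V₂ ∧ j ∈ V₅)

theorem IsTypeIILabelling.isTypeIIPartition {a : V → ℝ} (h : IsTypeIILabelling G a) :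
    IsTypeIIPartition G {v | a v = 1} {v | a v = -1}
      {v | a v = 0 ∧ ∀ i, a i = 1 → ¬G.Adj i v} {v | a v = 0 ∧ ∃ i, a i = 1 ∧ G.Adj i v} ∅ where
  exhaustive v := by
    have := h.eq_zero_or_one_or_neg_one v
    simp only [Set.mem_ofPred_eq]
    grind
  pairwise_disjoint := by
    norm_num +contextual [Set.disjoint_left]
  bipartite i j hij hi hj := by
    have := h.not_both i j hij
    simp only [Set.mem_union, Set.mem_ofPred_eq] at hi hj ⊢
    tauto
  exists_adj₁₄ := by
    obtain ⟨i, j, hij, hi, hj⟩ := h.exists_pos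
    exact ⟨i, j, hi, ⟨hj, i, hi, hij⟩, hij⟩
  exists_adj₂₃ := by
    obtain ⟨k, l, hkl, hk, hl⟩ := h.exists_neg
    exact ⟨k, l, hk, ⟨hl, fun i hi hil =>
      G.irrefl (h.adj_and_adj i l k l hi hl hk hl hil hkl).2⟩, hkl⟩
  cycleCompatible i j k l hi hj hk hl hij hkl := by
    simp only [Set.mem_ofPred_eq] at hi hj hk hl
    obtain ⟨hik, hjl⟩ := h.adj_and_adj i j k l hi hj.1 hk hl.1 hij hkl
    exact cycleCompatible_of_adj hij hkl hik hjl
      (ne_of_apply_ne a (by norm_num [hi, hl.1])) (ne_of_apply_ne a (by norm_num [hj.1, hk]))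
  not_adj i j hij :=
    ⟨fun ⟨hi, hj⟩ => hj.2 i hi hij, fun ⟨_, hj⟩ => hj, fun ⟨hi, hj, u, hu, huj⟩ =>
      G.irrefl (h.adj_and_adj u j i j hu hj hi hj huj hij).2, fun ⟨_, hj⟩ => hj⟩

/-- The labelling of the vertices by `1` on `V₁ \ V₂`, `-1` on `V₂ \ V₁` and `0` elsewhere, which
turns a partition into the coefficient vector of a hyperplane. -/
noncomputable def signLabelling (V₁ V₂ : Set V) : V → ℝ :=
  V₁.indicator 1 - V₂.indicator 1

variable {V₁ V₂ V₃ V₄ V₅ : Set V}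

theorem signLabelling_eq_one_iff {v : V} : signLabelling V₁ V₂ v = 1 ↔ v ∈ V₁ ∧ v ∉ V₂ := by
  by_cases h₁ : v ∈ V₁ <;> by_cases h₂ : v ∈ V₂ <;> norm_num [signLabelling, h₁, h₂]

theorem signLabelling_eq_neg_one_iff {v : V} :
    signLabelling V₁ V₂ v = -1 ↔ v ∈ V₂ ∧ v ∉ V₁ := by
  by_cases h₁ : v ∈ V₁ <;> by_cases h₂ : v ∈ V₂ <;> norm_num [signLabelling, h₁, h₂]

theorem signLabelling_eq_zero_iff {v : V} : signLabelling V₁ V₂ v = 0 ↔ (v ∈ V₁ ↔ v ∈ V₂) := by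
  by_cases h₁ : v ∈ V₁ <;> by_cases h₂ : v ∈ V₂ <;> norm_num [signLabelling, h₁, h₂]

theorem IsTypeIIPartition.isTypeIILabelling (h : IsTypeIIPartition G V₁ V₂ V₃ V₄ V₅) :
    IsTypeIILabelling G (signLabelling V₁ V₂) := by
  have hdisj := h.pairwise_disjoint
  simp only [List.pairwise_cons, List.mem_cons, forall_eq_or_imp, Set.disjoint_left] at hdisj
  refine ⟨fun i => ?_, fun i j hij => ?_, ?_, ?_, fun i j k l hi hj hk hl hij hkl => ?_⟩
  all_goals simp only [signLabelling_eq_one_iff, signLabelling_eq_neg_one_iff,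
    signLabelling_eq_zero_iff] at *
  · tauto
  · have := h.bipartite i j hij
    simp only [Set.mem_union] at this
    tauto
  · obtain ⟨i, j, hi, hj, hij⟩ := h.exists_adj₁₄
    exact ⟨i, j, hij, by grind⟩
  · obtain ⟨k, l, hk, hl, hkl⟩ := h.exists_adj₂₃
    exact ⟨k, l, hkl, by grind⟩
  · have hj₄ : j ∈ V₄ := by
      have := h.exhaustive j
      have := h.not_adj i j hij
      have := h.bipartite i j hij
      grind
    have hl₃ : l ∈ V₃ := by
      have := h.exhaustive l
      have := h.not_adj k l hkl
      grind
    exact (h.cycleCompatible i j k l hi.1 hj₄ hk.1 hl₃ hij hkl).adj_and_adj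
      (fun hil => (h.not_adj i l hil).1 ⟨hi.1, hl₃⟩)
      (fun hjk => (h.not_adj k j hjk.symm).2.2.1 ⟨hk.1, hj₄⟩)

end Partition

/-- For a finite connected simple graph `G` on `[d]`, the edge polytope
`𝒫_G` is type II decomposable iff there is a partition `[d] = V₁ ⊔ V₂ ⊔ V₃ ⊔ V₄ ⊔ V₅` such
that: (1) `G[V₁ ∪ V₂]` is bipartite with bipartition `V₁, V₂`; (2) `E_{1,4}` and `E_{2,3}`
are nonempty and every pair `e ∈ E_{1,4}`, `f ∈ E_{2,3}` is cycle-compatible;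
(3) `E_{1,3} = E_{1,5} = E_{2,4} = E_{2,5} = ∅`. -/
theorem typeII_iff_partition {d : ℕ} (G : SimpleGraph (Fin d)) (hG : G.Connected) :
    TypeIIDecomposable G ↔
      ∃ V₁ V₂ V₃ V₄ V₅ : Set (Fin d),
        (∀ v, v ∈ V₁ ∨ v ∈ V₂ ∨ v ∈ V₃ ∨ v ∈ V₄ ∨ v ∈ V₅) ∧
        (Disjoint V₁ V₂ ∧ Disjoint V₁ V₃ ∧ Disjoint V₁ V₄ ∧ Disjoint V₁ V₅ ∧
          Disjoint V₂ V₃ ∧ Disjoint V₂ V₄ ∧ Disjoint V₂ V₅ ∧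
          Disjoint V₃ V₄ ∧ Disjoint V₃ V₅ ∧ Disjoint V₄ V₅) ∧
        (∀ i j, G.Adj i j → i ∈ V₁ ∪ V₂ → j ∈ V₁ ∪ V₂ →
          ((i ∈ V₁ ∧ j ∈ V₂) ∨ (i ∈ V₂ ∧ j ∈ V₁))) ∧
        (∃ i j, i ∈ V₁ ∧ j ∈ V₄ ∧ G.Adj i j) ∧
        (∃ k l, k ∈ V₂ ∧ l ∈ V₃ ∧ G.Adj k l) ∧
        (∀ i j k l, i ∈ V₁ → j ∈ V₄ → k ∈ V₂ → l ∈ V₃ → G.Adj i j → G.Adj k l →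
          CycleCompatible G s(i, j) s(k, l)) ∧
        (∀ i j, G.Adj i j → ¬(i ∈ V₁ ∧ j ∈ V₃) ∧ ¬(i ∈ V₁ ∧ j ∈ V₅) ∧
          ¬(i ∈ V₂ ∧ j ∈ V₄) ∧ ¬(i ∈ V₂ ∧ j ∈ V₅)) := by
  rw [typeIIDecomposable_iff_exists_isTypeIILabelling hG.preconnected]
  constructor
  · rintro ⟨a, ha⟩
    have h := ha.isTypeIIPartition
    exact ⟨_, _, _, _, _, h.exhaustive, by simpa [and_assoc] using h.pairwise_disjoint, h.bipartite,
      h.exists_adj₁₄, h.exists_adj₂₃, h.cycleCompatible, h.not_adj⟩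
  · rintro ⟨V₁, V₂, V₃, V₄, V₅, hexh, hdisj, hbip, h₁₄, h₂₃, hcyc, hnot⟩
    have h : IsTypeIIPartition G V₁ V₂ V₃ V₄ V₅ :=
      ⟨hexh, by simpa [and_assoc] using hdisj, hbip, h₁₄, h₂₃, hcyc, hnot⟩
    exact ⟨_, h.isTypeIILabelling⟩
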